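/- Non-stabilizerness–entanglement relation (Theorem 1 of the paper): for every natural number n ≥ 1, every integer α ≥ 2, and every unit vector ψ : (Fin n → Fin 2) → ℂ, one has (1 - α) · M_α(ψ) + E₂(ψ'_α) = Real.log d, where d = 2^n, M_α(ψ) = (1 - α)⁻¹ · Real.log (A_α(ψ)) is the α-Stabilizer Rényi Entropy, and E₂(ψ'_α) = - Real.log ( Re( trace(χ * χ) ) ) is the 2-Rényi entropy of entanglement of ψ'_α across the ancilla/copies bipartition, with χ the ancilla marginal matrix indexed by (Fin n → Fin 4) with entries χ i j = Σ over all f : Fin α → Fin n → Fin 2 of ψ'_α (i, f) · conj(ψ'_α (j, f)). -/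

import Mathlib

open Complex Matrix BigOperators

/-- The single-qubit Pauli matrices `Q₀ = 1`, `Q₁ = X`, `Q₂ = Y`, `Q₃ = Z`. -/
noncomputable def Q : Fin 4 → Matrix (Fin 2) (Fin 2) ℂ :=
  ![1, !![0, 1; 1, 0], !![0, -Complex.I; Complex.I, 0], !![1, 0; 0, -1]]

/-- The `n`-qubit Pauli string `P_s`, the Kronecker product of the `Q (s k)`. -/
noncomputable def P {n : ℕ} (s : Fin n → Fin 4) :
    Matrix (Fin n → Fin 2) (Fin n → Fin 2) ℂ :=
  Matrix.of fun i j => ∏ k, Q (s k) (i k) (j k)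


/-- `A_α(ψ) = d⁻¹ ∑_s ⟨ψ, P_s ψ⟩^(2α)` with `d = 2^n`. -/
noncomputable def A (n α : ℕ) (ψ : (Fin n → Fin 2) → ℂ) : ℝ :=
  (2 ^ n : ℝ)⁻¹ * ∑ s : Fin n → Fin 4, (star ψ ⬝ᵥ (P s).mulVec ψ).re ^ (2 * α)


/-- The purified state `ψ′_α = d⁻¹ ∑_t |t⟩ ⊗ (P_t ψ)^⊗α`. -/
noncomputable def psi' (n α : ℕ) (ψ : (Fin n → Fin 2) → ℂ) :
    (Fin n → Fin 4) × (Fin α → Fin n → Fin 2) → ℂ :=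
  fun p => (2 ^ n : ℂ)⁻¹ * ∏ m, (P p.1).mulVec ψ (p.2 m)


/-- Ancilla marginal of the purified state. -/
noncomputable def chi (n α : ℕ) (ψ : (Fin n → Fin 2) → ℂ) :
    Matrix (Fin n → Fin 4) (Fin n → Fin 4) ℂ :=
  Matrix.of fun i j => ∑ f : Fin α → Fin n → Fin 2,
    psi' n α ψ (i, f) * (starRingEnd ℂ) (psi' n α ψ (j, f))

/-! The entries of the ancilla marginal are `χ i j = d⁻² ⟨ψ, P_j P_i ψ⟩ ^ α`. Up to a phase, the
product `P_j P_i` is again a Pauli string, and for fixed `j` every string arises from exactly one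
`i`. As `χ` is Hermitian, its purity is the sum of the `|χ i j|²`, in which the phases drop out, so
that `tr χ² = d⁻⁴ · d² · ∑ₛ ⟨ψ, P_s ψ⟩ ^ (2α) = d⁻¹ A_α(ψ)`. -/

section PiKronecker

variable {ι R : Type*} [Fintype ι] [CommSemiring R] {l m n : ι → Type*}

/-- The Kronecker product of a finite family of matrices, rows and columns being indexed by
dependent functions. The Pauli string `P s` is the Kronecker product of the matrices `Q (s k)`. -/
def piKronecker (M : ∀ k, Matrix (l k) (m k) R) : Matrix (∀ k, l k) (∀ k, m k) R :=
  of fun i j => ∏ k, M k (i k) (j k)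

lemma piKronecker_mul_piKronecker [DecidableEq ι] [∀ k, Fintype (m k)]
    (M : ∀ k, Matrix (l k) (m k) R) (N : ∀ k, Matrix (m k) (n k) R) :
    piKronecker M * piKronecker N = piKronecker fun k => M k * N k := by
  ext i j
  simp only [piKronecker, mul_apply, of_apply, ← Finset.prod_mul_distrib, Finset.prod_univ_sum,
    Fintype.piFinset_univ]

lemma piKronecker_smul (c : ι → R) (M : ∀ k, Matrix (l k) (m k) R) :
    piKronecker (fun k => c k • M k) = (∏ k, c k) • piKronecker M := by
  ext i j
  simp only [piKronecker, of_apply, Matrix.smul_apply, smul_eq_mul,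
    Finset.prod_mul_distrib]

lemma piKronecker_one [∀ k, DecidableEq (m k)] :
    piKronecker (fun k => (1 : Matrix (m k) (m k) R)) = 1 := by
  ext i j
  simp only [piKronecker, of_apply, one_apply, Finset.prod_ite_zero, Finset.prod_const_one,
    Finset.mem_univ, true_imp_iff, funext_iff]

lemma conjTranspose_piKronecker [StarRing R] (M : ∀ k, Matrix (l k) (m k) R) :
    (piKronecker M)ᴴ = piKronecker fun k => (M k)ᴴ := by
  ext i j
  simp only [piKronecker, conjTranspose_apply, of_apply, star_prod]

end PiKronecker

section InnerProduct

variable {m n R : Type*} [Fintype n] [CommSemiring R] [StarRing R]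

lemma mulVec_dotProduct_star_mulVec [Fintype m] (M N : Matrix m n R) (u v : n → R) :
    M.mulVec u ⬝ᵥ star (N.mulVec v) = star v ⬝ᵥ (Nᴴ * M).mulVec u := by
  rw [dotProduct_comm, star_mulVec, ← dotProduct_mulVec, mulVec_mulVec]

lemma sum_prod_mul_star_prod_eq_dotProduct_pow (α : ℕ) (u v : n → R) :
    ∑ f : Fin α → n, (∏ k, u (f k)) * star (∏ k, v (f k)) = (u ⬝ᵥ star v) ^ α := by
  simp only [dotProduct, Pi.star_apply, Fintype.sum_pow, Finset.prod_mul_distrib, star_prod]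

end InnerProduct

lemma trace_mul_self_of_isHermitian {𝕜 m : Type*} [RCLike 𝕜] [Fintype m] {M : Matrix m m 𝕜}
    (hM : M.IsHermitian) :
    (M * M).trace = ((∑ i, ∑ j, ‖M i j‖ ^ 2 : ℝ) : 𝕜) := by
  simp only [trace, diag_apply, mul_apply, RCLike.ofReal_sum, RCLike.ofReal_pow]
  refine Finset.sum_congr rfl fun i _ => Finset.sum_congr rfl fun j _ => ?_
  rw [← hM.apply j i, RCLike.star_def, RCLike.mul_conj]

/-- The phase `c` in `Q a * Q b = c • Q (a ^^^ b)`. -/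
noncomputable def pauliPhase : Matrix (Fin 4) (Fin 4) ℂ :=
  !![1, 1, 1, 1; 1, 1, I, -I; 1, -I, 1, I; 1, I, -I, 1]

lemma norm_pauliPhase (a b : Fin 4) : ‖pauliPhase a b‖ = 1 := by
  fin_cases a <;> fin_cases b <;> simp [pauliPhase]

lemma Q_mul_Q (a b : Fin 4) : Q a * Q b = pauliPhase a b • Q (a ^^^ b) := by
  fin_cases a <;> fin_cases b <;> ext x y <;> fin_cases x <;> fin_cases y <;>
    simp [pauliPhase, Q]

lemma isHermitian_Q (a : Fin 4) : (Q a).IsHermitian := by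
  ext x y
  fin_cases a <;> fin_cases x <;> fin_cases y <;> simp [Q]

section PauliLabel

variable {ι : Type*}

/-- The label of the Pauli string `P s * P t`, up to a phase. The labels `0, 1, 2, 3` are read as
pairs of bits, on which multiplication of Pauli matrices acts by exclusive or. -/
def pauliLabelMul (s t : ι → Fin 4) : ι → Fin 4 := fun k => s k ^^^ t k

lemma involutive_pauliLabelMul (s : ι → Fin 4) : Function.Involutive (pauliLabelMul s) := by
  have xor_xor_cancel_left : ∀ a b : Fin 4, a ^^^ (a ^^^ b) = b := by decide
  exact fun t => funext fun k => xor_xor_cancel_left (s k) (t k)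

lemma sum_sum_pauliLabelMul [Fintype ι] [DecidableEq ι] {M : Type*} [AddCommMonoid M]
    (f : (ι → Fin 4) → M) :
    ∑ s, ∑ t, f (pauliLabelMul s t) = 4 ^ Fintype.card ι • ∑ s, f s := by
  have sum_right (s : ι → Fin 4) : ∑ t, f (pauliLabelMul s t) = ∑ t, f t :=
    (involutive_pauliLabelMul s).bijective.sum_comp f
  simp only [sum_right, Finset.sum_const, Finset.card_univ, Fintype.card_fun, Fintype.card_fin]

end PauliLabel

section PauliString

variable {n : ℕ}

lemma P_eq_piKronecker (s : Fin n → Fin 4) : P s = piKronecker fun k => Q (s k) := rfl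

lemma P_zero : P (0 : Fin n → Fin 4) = 1 := piKronecker_one

lemma isHermitian_P (s : Fin n → Fin 4) : (P s).IsHermitian := by
  rw [IsHermitian, P_eq_piKronecker, conjTranspose_piKronecker]
  simp only [(isHermitian_Q _).eq]

lemma P_mul_P (s t : Fin n → Fin 4) :
    P s * P t = (∏ k, pauliPhase (s k) (t k)) • P (pauliLabelMul s t) := by
  simp only [P_eq_piKronecker, piKronecker_mul_piKronecker, Q_mul_Q, piKronecker_smul,
    pauliLabelMul]

lemma norm_star_dotProduct_P_mulVec (ψ : (Fin n → Fin 2) → ℂ) (s : Fin n → Fin 4) :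
    ‖star ψ ⬝ᵥ (P s).mulVec ψ‖ = |(star ψ ⬝ᵥ (P s).mulVec ψ).re| :=
  (Complex.abs_re_eq_norm.mpr ((isHermitian_P s).im_star_dotProduct_mulVec_self ψ)).symm

lemma norm_P_mulVec_dotProduct_star_P_mulVec (ψ : (Fin n → Fin 2) → ℂ) (s t : Fin n → Fin 4) :
    ‖(P s).mulVec ψ ⬝ᵥ star ((P t).mulVec ψ)‖ =
      |(star ψ ⬝ᵥ (P (pauliLabelMul t s)).mulVec ψ).re| := by
  rw [mulVec_dotProduct_star_mulVec, (isHermitian_P t).eq, P_mul_P, smul_mulVec, dotProduct_smul,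
    norm_smul, norm_prod, norm_star_dotProduct_P_mulVec]
  simp only [norm_pauliPhase, Finset.prod_const_one, one_mul]

end PauliString

section Purification

variable (n α : ℕ) (ψ : (Fin n → Fin 2) → ℂ)

lemma isHermitian_chi : (chi n α ψ).IsHermitian := by
  ext i j
  simp only [chi, conjTranspose_apply, of_apply, starRingEnd_apply, star_sum, star_mul, star_star]

lemma chi_apply (i j : Fin n → Fin 4) :
    chi n α ψ i j =
      ((2 ^ n : ℂ)⁻¹) ^ 2 * ((P i).mulVec ψ ⬝ᵥ star ((P j).mulVec ψ)) ^ α := by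
  rw [← sum_prod_mul_star_prod_eq_dotProduct_pow, Finset.mul_sum]
  simp only [chi, psi', of_apply, starRingEnd_apply, star_mul', star_inv₀, star_pow, star_ofNat]
  exact Finset.sum_congr rfl fun f _ => by ring

lemma norm_chi_apply_sq (i j : Fin n → Fin 4) :
    ‖chi n α ψ i j‖ ^ 2 =
      ((2 ^ n : ℝ)⁻¹) ^ 4 * (star ψ ⬝ᵥ (P (pauliLabelMul j i)).mulVec ψ).re ^ (2 * α) := by
  rw [chi_apply, norm_mul, norm_pow, norm_pow, norm_P_mulVec_dotProduct_star_P_mulVec, norm_inv,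
    norm_pow, Complex.norm_ofNat, mul_pow, ← pow_mul, pow_right_comm, sq_abs, ← pow_mul]

lemma sum_norm_chi_apply_sq : ∑ i, ∑ j, ‖chi n α ψ i j‖ ^ 2 = (2 ^ n : ℝ)⁻¹ * A n α ψ := by
  have four_pow_eq : ((4 ^ n : ℕ) : ℝ) = (2 ^ n) ^ 2 := by
    rw [pow_right_comm]
    norm_num
  simp only [norm_chi_apply_sq, ← Finset.mul_sum]
  rw [Finset.sum_comm, sum_sum_pauliLabelMul fun s => (star ψ ⬝ᵥ (P s).mulVec ψ).re ^ (2 * α),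
    nsmul_eq_mul, Fintype.card_fin, four_pow_eq, A]
  field_simp

lemma trace_chi_mul_chi : (chi n α ψ * chi n α ψ).trace = (((2 ^ n)⁻¹ * A n α ψ : ℝ) : ℂ) := by
  rw [trace_mul_self_of_isHermitian (isHermitian_chi n α ψ), sum_norm_chi_apply_sq]
  rfl

variable {ψ}

lemma A_pos (hψ : ψ ≠ 0) : 0 < A n α ψ := by
  have norm_sq_pos : 0 < (star ψ ⬝ᵥ (P 0).mulVec ψ).re := by
    open scoped ComplexOrder in
    rw [P_zero, one_mulVec]
    exact (Complex.pos_iff.mp (dotProduct_star_self_pos_iff.mpr hψ)).1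
  refine mul_pos (by positivity) (Finset.sum_pos' (fun s _ => ?_) ⟨0, Finset.mem_univ _, ?_⟩)
  · exact (even_two_mul α).pow_nonneg _
  · exact pow_pos norm_sq_pos _

end Purification

theorem nonstabilizerness_entanglement_relation_general (n : ℕ) {α : ℕ} (hα : α ≠ 1)
    {ψ : (Fin n → Fin 2) → ℂ} (hψ : ψ ≠ 0) :
    (1 - (α : ℝ)) * ((1 - (α : ℝ))⁻¹ * Real.log (A n α ψ))
        + (- Real.log (((chi n α ψ * chi n α ψ).trace).re))
      = Real.log (2 ^ n : ℝ) := by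
  have one_sub_ne_zero : 1 - (α : ℝ) ≠ 0 := sub_ne_zero.mpr (mod_cast hα.symm)
  rw [mul_inv_cancel_left₀ one_sub_ne_zero, trace_chi_mul_chi, Complex.ofReal_re,
    Real.log_mul (by positivity) (A_pos n α hψ).ne', Real.log_inv]
  ring

theorem nonstabilizerness_entanglement_relation (n : ℕ) (hn : 1 ≤ n) (α : ℕ) (hα : 2 ≤ α)
    (ψ : (Fin n → Fin 2) → ℂ) (hψ : star ψ ⬝ᵥ ψ = 1) :
    (1 - (α : ℝ)) * ((1 - (α : ℝ))⁻¹ * Real.log (A n α ψ))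
        + (- Real.log (((chi n α ψ * chi n α ψ).trace).re))
      = Real.log (2 ^ n : ℝ) :=
  nonstabilizerness_entanglement_relation_general n (by lia)
    (by rintro rfl; simp at hψ)
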